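/- Let K be an algebraically closed field of characteristic zero and let L be a nonzero finite-dimensional semisimple Lie algebra over K. Then every Lie algebra automorphism φ of L has a nonzero fixed vector: there exists x ∈ L with x ≠ 0 and φ(x) = x. -/

import Mathlib

/-!
Suppose the automorphism `φ` has no nonzero fixed vector. The generalized eigenspaces `L_μ` of `φ`
grade `L` by the multiplicative group of `K`, that is `[L_μ, L_ν] ⊆ L_{μν}`
(`lie_mem_maxGenEigenspace_mul`), and `L_1 = 0`.

Some eigenvalue `μ` has the property that `ad x` is nilpotent for every `x ∈ L_μ`, because for each
`ν` one of the numbers `μ ^ r * ν` is not an eigenvalue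
(`exists_mem_forall_exists_pow_mul_notMem`). If some eigenvalue has infinite order, it will do,
as there are only finitely many eigenvalues. Otherwise the eigenvalues are powers of a primitive
root of unity `ζ`, and one takes `μ = ζ ^ k` with `k` minimal: walking around the circle in steps
of length `k` one must enter the window of exponents `0, …, k - 1`, where there are no eigenvalues.

Let `x ∈ L_μ` be nonzero. By invariance the Killing form pairs `x` trivially with `L_ν` unless
`μ * ν = 1` (`apply_eq_zero_of_mem_maxGenEigenspace`). If `μ * ν = 1` and `y ∈ L_ν`, then
`[x, y] ∈ L_1 = 0`, so the nilpotent `ad x` commutes with `ad y`, and `ad x ∘ ad y` is nilpotent and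
hence of trace zero. So `x` lies in the radical of the Killing form, which is nondegenerate by
Cartan's criterion: a contradiction.
-/

open Module Module.End

/-- A finite nonempty set `S` of nonzero elements of an algebraically closed field of
characteristic zero with `1 ∉ S` has an element `μ` such that repeated multiplication by `μ` takes every `ν` out of `S`
at some point. -/
lemma exists_mem_forall_exists_pow_mul_notMem {K : Type*} [Field K] [IsAlgClosed K] [CharZero K]
    {S : Set K} (hfin : S.Finite) (hne : S.Nonempty) (h0 : (0 : K) ∉ S) (h1 : (1 : K) ∉ S) :
    ∃ μ ∈ S, ∀ ν : K, ∃ r : ℕ, μ ^ r * ν ∉ S := by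
  by_cases htor : ∀ μ ∈ S, IsOfFinOrder μ
  · -- All elements of `S` are powers of one primitive root of unity `ζ`, of order `m`.
    let m := ∏ μ ∈ hfin.toFinset, orderOf μ
    have hm : m ≠ 0 := Finset.prod_ne_zero_iff.mpr fun μ hμ ↦
      (orderOf_pos_iff.mpr (htor μ (hfin.mem_toFinset.mp hμ))).ne'
    have : NeZero m := ⟨hm⟩
    have : NeZero (m : K) := ⟨Nat.cast_ne_zero.mpr hm⟩
    obtain ⟨ζ, hζ⟩ := HasEnoughRootsOfUnity.exists_primitiveRoot K m
    have hS : ∀ μ ∈ S, ∃ i < m, ζ ^ i = μ := fun μ hμ ↦ hζ.eq_pow_of_pow_eq_one <|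
      orderOf_dvd_iff_pow_eq_one.mp (Finset.dvd_prod_of_mem _ (hfin.mem_toFinset.mpr hμ))
    -- Take `μ = ζ ^ k` with `k` minimal. Steps of length `k` around the circle `ℤ/m` cannot
    -- avoid the window `[0, k)`, none of whose exponents occurs in `S`.
    have hex : ∃ k, ζ ^ k ∈ S := by
      obtain ⟨μ, hμ⟩ := hne
      obtain ⟨i, -, rfl⟩ := hS μ hμ
      exact ⟨i, hμ⟩
    classical
    let k := Nat.find hex
    have hk : ζ ^ k ∈ S := Nat.find_spec hex
    have hkmin : ∀ j < k, ζ ^ j ∉ S := fun j hj ↦ Nat.find_min hex hj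
    have hk0 : 0 < k := Nat.pos_of_ne_zero fun h ↦ h1 (by simpa [h] using hk)
    refine ⟨ζ ^ k, hk, fun ν ↦ ?_⟩
    by_cases hν : ν ∈ S
    · obtain ⟨j, hj, rfl⟩ := hS ν hν
      -- `r` is the first step with `m ≤ k * r + j`.
      have hex' : ∃ r, m ≤ k * r + j := ⟨m, by nlinarith⟩
      obtain ⟨r, hr, hrmin⟩ : ∃ r, m ≤ k * r + j ∧ ∀ s < r, k * s + j < m :=
        ⟨Nat.find hex', Nat.find_spec hex', fun s hs ↦ not_le.mp (Nat.find_min hex' hs)⟩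
      have hlt : k * r + j < m + k := by
        cases r with
        | zero => omega
        | succ s => have := hrmin s (Nat.lt_succ_self s); rw [Nat.mul_succ]; omega
      refine ⟨r, ?_⟩
      have : (ζ ^ k) ^ r * ζ ^ j = ζ ^ (k * r + j - m) := by
        rw [← pow_mul, ← pow_add]
        conv_lhs => rw [← Nat.sub_add_cancel hr, pow_add, hζ.pow_eq_one, mul_one]
      rw [this]
      exact hkmin _ (by omega)
    · exact ⟨0, by simpa using hν⟩
  · push Not at htor
    obtain ⟨μ, hμ, hinf⟩ := htor
    refine ⟨μ, hμ, fun ν ↦ ?_⟩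
    by_contra! hall
    have hμ0 : μ ≠ 0 := fun h ↦ h0 (h ▸ hμ)
    have hν0 : ν ≠ 0 := by
      rintro rfl
      exact h0 (by simpa using hall 0)
    -- The elements `μ ^ r * ν` are pairwise distinct, so they cannot all lie in `S`.
    refine Set.infinite_of_injective_forall_mem (f := fun r : ℕ ↦ μ ^ r * ν) ?_ hall hfin
    intro a b hab
    wlog hlt : a < b generalizing a b
    · by_contra hne'
      exact hne' (this hab.symm (by omega)).symm
    refine (hinf (isOfFinOrder_iff_pow_eq_one.mpr ⟨b - a, by omega, ?_⟩)).elim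
    have hpow : μ ^ a = μ ^ b := mul_right_cancel₀ hν0 hab
    rw [← Nat.sub_add_cancel hlt.le, pow_add] at hpow
    exact mul_right_cancel₀ (pow_ne_zero a hμ0) (by rw [one_mul]; exact hpow.symm)

section

variable {K : Type*} [Field K] {L : Type*} [LieRing L] [LieAlgebra K L]

/-- The bracket is multiplicative on generalized eigenspaces of an automorphism. -/
lemma lie_mem_maxGenEigenspace_mul (φ : L ≃ₗ⁅K⁆ L) {μ ν : K} {x y : L}
    (hx : x ∈ maxGenEigenspace (φ : L →ₗ[K] L) μ) (hy : y ∈ maxGenEigenspace (φ : L →ₗ[K] L) ν) :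
    ⁅x, y⁆ ∈ maxGenEigenspace (φ : L →ₗ[K] L) (μ * ν) := by
  set f : End K L := (φ : L →ₗ[K] L)
  have hf : ∀ z, f z = φ z := fun _ ↦ rfl
  rw [mem_maxGenEigenspace] at hx hy ⊢
  obtain ⟨m, hm⟩ := hx
  obtain ⟨n, hn⟩ := hy
  refine ⟨m + n, ?_⟩
  -- Induct on `m + n` using `(φ - μν)[x, y] = [(φ - μ)x, φ y] + μ [x, (φ - ν)y]`.
  induction h : m + n generalizing m n x y with
  | zero =>
    obtain rfl : m = 0 := by omega
    simp_all
  | succ s ih =>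
    have key : (f - (μ * ν) • (1 : End K L)) ⁅x, y⁆ =
        ⁅(f - μ • (1 : End K L)) x, f y⁆ + μ • ⁅x, (f - ν • (1 : End K L)) y⁆ := by
      simp only [LinearMap.sub_apply, LinearMap.smul_apply, Module.End.one_apply, hf, sub_lie,
        lie_sub, smul_lie, lie_smul, smul_sub, mul_smul, LieEquiv.map_lie]
      abel
    rw [pow_succ, Module.End.mul_apply, key, map_add, map_smul]
    have hcomm : ((f - ν • (1 : End K L)) ^ n) (f y) = 0 := by
      have : Commute ((f - ν • (1 : End K L)) ^ n) f :=
        (((Commute.refl f).sub_left ((Commute.one_left f).smul_left ν))).pow_left n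
      rw [← Module.End.mul_apply, this.eq, Module.End.mul_apply, hn, map_zero]
    have h₁ : ((f - (μ * ν) • (1 : End K L)) ^ s) ⁅(f - μ • (1 : End K L)) x, f y⁆ = 0 := by
      cases m with
      | zero => simp_all
      | succ m =>
        exact ih m (by rwa [pow_succ, Module.End.mul_apply] at hm) n hcomm (by omega)
    have h₂ : ((f - (μ * ν) • (1 : End K L)) ^ s) ⁅x, (f - ν • (1 : End K L)) y⁆ = 0 := by
      cases n with
      | zero => simp_all
      | succ n =>
        exact ih m hm n (by rwa [pow_succ, Module.End.mul_apply] at hn) (by omega)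
    rw [h₁, h₂, smul_zero, add_zero]

/-- A form invariant under an endomorphism pairs generalized eigenspaces trivially unless the
eigenvalues are mutually inverse. -/
lemma apply_eq_zero_of_mem_maxGenEigenspace {V : Type*} [AddCommGroup V] [Module K V]
    (f : End K V) (B : LinearMap.BilinForm K V) (hB : ∀ x y, B (f x) (f y) = B x y)
    {μ ν : K} (hμν : μ * ν ≠ 1) {x y : V}
    (hx : x ∈ maxGenEigenspace f μ) (hy : y ∈ maxGenEigenspace f ν) : B x y = 0 := by
  rw [mem_maxGenEigenspace] at hx hy
  obtain ⟨m, hm⟩ := hx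
  obtain ⟨n, hn⟩ := hy
  induction h : m + n generalizing m n x y with
  | zero =>
    obtain rfl : m = 0 := by omega
    simp_all
  | succ s ih =>
    -- The same induction on `m + n` as for brackets: `B x y = B (f x) (f y)`, expanded.
    have key : (1 - μ * ν) * B x y =
        B ((f - μ • (1 : End K V)) x) (f y) + μ * B x ((f - ν • (1 : End K V)) y) := by
      simp [hB]
      ring
    have hcomm : ((f - ν • (1 : End K V)) ^ n) (f y) = 0 := by
      have : Commute ((f - ν • (1 : End K V)) ^ n) f :=
        (((Commute.refl f).sub_left ((Commute.one_left f).smul_left ν))).pow_left n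
      rw [← Module.End.mul_apply, this.eq, Module.End.mul_apply, hn, map_zero]
    have h₁ : B ((f - μ • (1 : End K V)) x) (f y) = 0 := by
      cases m with
      | zero => simp_all
      | succ m =>
        exact ih m (by rwa [pow_succ, Module.End.mul_apply] at hm) n hcomm (by omega)
    have h₂ : B x ((f - ν • (1 : End K V)) y) = 0 := by
      cases n with
      | zero => simp_all
      | succ n =>
        exact ih m hm n (by rwa [pow_succ, Module.End.mul_apply] at hn) (by omega)
    rw [h₁, h₂, mul_zero, add_zero] at key
    exact (mul_eq_zero.mp key).resolve_left (sub_ne_zero.mpr hμν.symm)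

end


/-- Lemma 3 (Lie-algebra core): every automorphism of a nonzero finite-dimensional
semisimple Lie algebra over an algebraically closed field of characteristic zero has a
nonzero fixed vector. -/
theorem stmt_15 (K : Type*) [Field K] [IsAlgClosed K] [CharZero K]
    (L : Type*) [LieRing L] [LieAlgebra K L] [Module.Finite K L] [Nontrivial L]
    [LieAlgebra.IsSemisimple K L] (φ : L ≃ₗ⁅K⁆ L) :
    ∃ x : L, x ≠ 0 ∧ φ x = x := by
  classical
  have : LieAlgebra.IsKilling K L := inferInstance
  set f : End K L := (φ : L →ₗ[K] L)
  by_contra! hfix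
  have h0 : ¬ f.HasEigenvalue 0 := fun h ↦ by
    obtain ⟨x, hx, hx0⟩ := h.exists_hasEigenvector
    rw [mem_eigenspace_iff, zero_smul] at hx
    exact hx0 (φ.injective (hx.trans (map_zero φ).symm))
  have h1 : ¬ f.HasEigenvalue 1 := fun h ↦ by
    obtain ⟨x, hx, hx0⟩ := h.exists_hasEigenvector
    rw [mem_eigenspace_iff, one_smul] at hx
    exact hfix x hx0 hx
  have hbot : ∀ μ, ¬ f.HasEigenvalue μ → maxGenEigenspace f μ = ⊥ := fun μ hμ ↦ by
    by_contra h
    exact hμ (HasUnifEigenvalue.lt (k := ⊤) zero_lt_one h)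
  have htop := iSup_maxGenEigenspace_eq_top f
  obtain ⟨μ, hμ, hesc⟩ := exists_mem_forall_exists_pow_mul_notMem
    (S := {μ | f.HasEigenvalue μ}) (finite_hasEigenvalue f) (exists_eigenvalue f) h0 h1
  obtain ⟨x, hx⟩ := hμ.exists_hasEigenvector
  have hxμ : x ∈ maxGenEigenspace f μ := eigenspace_le_maxGenEigenspace hx.1
  -- `ad x` moves every generalized eigenspace out of the spectrum after finitely many steps.
  have hnil : IsNilpotent (LieAlgebra.ad K L x) := by
    rw [Module.End.isNilpotent_iff_of_finite]
    have hpow : ∀ (ν : K) (y : L), y ∈ maxGenEigenspace f ν → ∀ r : ℕ,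
        ((LieAlgebra.ad K L x) ^ r) y ∈ maxGenEigenspace f (μ ^ r * ν) := by
      intro ν y hy r
      induction r with
      | zero => simpa using hy
      | succ r ih =>
        rw [pow_succ' μ, mul_assoc, pow_succ' (LieAlgebra.ad K L x), Module.End.mul_apply,
          LieAlgebra.ad_apply]
        exact lie_mem_maxGenEigenspace_mul φ hxμ ih
    intro y
    suffices y ∈ maxGenEigenspace (LieAlgebra.ad K L x) 0 by simpa using this
    have hle : ⨆ ν, maxGenEigenspace f ν ≤ maxGenEigenspace (LieAlgebra.ad K L x) 0 := by
      refine iSup_le fun ν y hy ↦ ?_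
      obtain ⟨r, hr⟩ := hesc ν
      have := hpow ν y hy r
      rw [hbot _ hr, Submodule.mem_bot] at this
      simpa using ⟨r, this⟩
    exact hle (htop ▸ Submodule.mem_top)
  -- `x` is therefore in the radical of the Killing form.
  have horth : ∀ y, killingForm K L x y = 0 := by
    intro y
    suffices y ∈ LinearMap.ker (killingForm K L x) from this
    have hle : ⨆ ν, maxGenEigenspace f ν ≤ LinearMap.ker (killingForm K L x) := by
      refine iSup_le fun ν y hy ↦ ?_
      rw [LinearMap.mem_ker]
      by_cases hμν : μ * ν = 1
      · have hxy : ⁅x, y⁆ = 0 := by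
          have := lie_mem_maxGenEigenspace_mul φ hxμ hy
          rw [hμν, hbot 1 h1] at this
          exact this
        have hcomm : Commute (LieAlgebra.ad K L x) (LieAlgebra.ad K L y) := by
          refine LinearMap.ext fun z ↦ ?_
          simp [Module.End.mul_apply, leibniz_lie x y z, hxy]
        rw [killingForm_apply_apply]
        exact (LinearMap.isNilpotent_trace_of_isNilpotent
          (hcomm.isNilpotent_mul_right hnil)).eq_zero
      · exact apply_eq_zero_of_mem_maxGenEigenspace f _ (LieAlgebra.killingForm_of_equiv_apply φ) hμν hxμ hy
    exact hle (htop ▸ Submodule.mem_top)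
  exact hx.2 ((LieAlgebra.IsKilling.killingForm_nondegenerate K L).1 x horth)
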